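/- arXiv:1004.2484 — 2 statements merged into one kernel-verified Lean document; each statement's English description precedes it below -/
import Mathlib

section
/- The forward and reverse achievable rate regions of a B-MAC network coincide: R_Φ(P_T) = R̂_{Φ^T}(P_T). -/
open Matrix ComplexOrder

noncomputable section

/-- Forward interference-plus-noise covariance of link `l` in a B-MAC network. -/
def bmacOmega {L : ℕ} (m n : Fin L → ℕ)
    (H : ∀ l k : Fin L, Matrix (Fin (n l)) (Fin (m k)) ℂ)
    (Φ : Fin L → Fin L → ℝ)
    (S : ∀ k : Fin L, Matrix (Fin (m k)) (Fin (m k)) ℂ) (l : Fin L) :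
    Matrix (Fin (n l)) (Fin (n l)) ℂ :=
  1 + ∑ k : Fin L, Φ l k • (H l k * S k * (H l k)ᴴ)

/-- Forward rate of link `l`. -/
def bmacRate {L : ℕ} (m n : Fin L → ℕ)
    (H : ∀ l k : Fin L, Matrix (Fin (n l)) (Fin (m k)) ℂ)
    (Φ : Fin L → Fin L → ℝ)
    (S : ∀ k : Fin L, Matrix (Fin (m k)) (Fin (m k)) ℂ) (l : Fin L) : ℝ :=
  Real.log ((bmacOmega m n H Φ S l + H l l * S l * (H l l)ᴴ).det.re)
    - Real.log ((bmacOmega m n H Φ S l).det.re)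

/-- Achievable rate region under a sum power constraint. -/
def bmacRegion {L : ℕ} (m n : Fin L → ℕ)
    (H : ∀ l k : Fin L, Matrix (Fin (n l)) (Fin (m k)) ℂ)
    (Φ : Fin L → Fin L → ℝ) (PT : ℝ) : Set (Fin L → ℝ) :=
  {r | (∀ l, 0 ≤ r l) ∧
    ∃ S : ∀ k : Fin L, Matrix (Fin (m k)) (Fin (m k)) ℂ,
      (∀ k, (S k).PosSemidef) ∧
      (∑ l, (Matrix.trace (S l)).re) ≤ PT ∧
      ∀ l, r l ≤ bmacRate m n H Φ S l}

/-- The real quadratic form `v ↦ v† A v` of a complex matrix. -/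
def quadForm {ι : Type*} [Fintype ι] (A : Matrix ι ι ℂ) (v : ι → ℂ) : ℝ :=
  (star v ⬝ᵥ A *ᵥ v).re

/-- The rank-one matrix `v v†`. -/
def outerSelf {ι : Type*} (v : ι → ℂ) : Matrix ι ι ℂ := vecMulVec v (star v)

section LinearAlgebra

variable {ι κ : Type*} [Fintype ι]

lemma quadForm_add (A B : Matrix ι ι ℂ) (v : ι → ℂ) :
    quadForm (A + B) v = quadForm A v + quadForm B v := by
  simp [quadForm, add_mulVec, dotProduct_add]

lemma quadForm_smul (c : ℝ) (A : Matrix ι ι ℂ) (v : ι → ℂ) :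
    quadForm (c • A) v = c * quadForm A v := by
  simp [quadForm, smul_mulVec, dotProduct_smul]

lemma quadForm_sum (s : Finset κ) (A : κ → Matrix ι ι ℂ) (v : ι → ℂ) :
    quadForm (∑ i ∈ s, A i) v = ∑ i ∈ s, quadForm (A i) v := by
  simp [quadForm, sum_mulVec, dotProduct_sum]

lemma star_dotProduct_star_comm (v w : ι → ℂ) : star v ⬝ᵥ w = star (star w ⬝ᵥ v) := by
  rw [star_dotProduct]

lemma quadForm_outerSelf (w v : ι → ℂ) :
    quadForm (outerSelf w) v = Complex.normSq (star v ⬝ᵥ w) := by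
  rw [quadForm, outerSelf, vecMulVec_mulVec, star_dotProduct_star_comm w v]
  simp [dotProduct_smul, Complex.normSq_apply]

lemma posSemidef_smul_outerSelf {c : ℝ} (hc : 0 ≤ c) (v : ι → ℂ) :
    (c • outerSelf v).PosSemidef :=
  (posSemidef_vecMulVec_self_star v).smul hc

lemma trace_smul_outerSelf (c : ℝ) (v : ι → ℂ) :
    (trace (c • outerSelf v)).re = c * (star v ⬝ᵥ v).re := by
  simp [outerSelf, trace_smul, trace_vecMulVec, dotProduct_comm v]

lemma mul_smul_outerSelf_mul {μ : Type*} (B : Matrix μ ι ℂ) (c : ℝ) (v : ι → ℂ) :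
    B * (c • outerSelf v) * Bᴴ = c • outerSelf (B *ᵥ v) := by
  rw [Matrix.mul_smul, Matrix.smul_mul, outerSelf, outerSelf, mul_vecMulVec, vecMulVec_mul,
    star_mulVec]

lemma Matrix.PosDef.coe_quadForm {A : Matrix ι ι ℂ} (hA : A.PosDef) (v : ι → ℂ) :
    star v ⬝ᵥ A *ᵥ v = (quadForm A v : ℂ) :=
  Complex.ext rfl (by simpa using hA.isHermitian.im_star_dotProduct_mulVec_self v)

lemma Matrix.PosDef.quadForm_nonneg {A : Matrix ι ι ℂ} (hA : A.PosDef) (v : ι → ℂ) :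
    0 ≤ quadForm A v :=
  hA.posSemidef.re_dotProduct_nonneg v

lemma Matrix.PosDef.quadForm_pos {A : Matrix ι ι ℂ} (hA : A.PosDef) {v : ι → ℂ} (hv : v ≠ 0) :
    0 < quadForm A v :=
  hA.re_dotProduct_pos hv

lemma Matrix.PosDef.add_sum_smul_outerSelf {A : Matrix ι ι ℂ} (hA : A.PosDef) (s : Finset κ)
    {p : κ → ℝ} (hp : ∀ i, 0 ≤ p i) (v : κ → ι → ℂ) :
    (A + ∑ i ∈ s, p i • outerSelf (v i)).PosDef :=
  hA.add_posSemidef (posSemidef_sum s fun i _ => posSemidef_smul_outerSelf (hp i) (v i))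

variable [DecidableEq ι]

lemma Matrix.PosDef.mulVec_inv_mulVec {A : Matrix ι ι ℂ} (hA : A.PosDef) (h : ι → ℂ) :
    A *ᵥ (A⁻¹ *ᵥ h) = h := by
  rw [mulVec_mulVec, mul_nonsing_inv _ (isUnit_iff_isUnit_det A |>.mp hA.isUnit), one_mulVec]

lemma Matrix.PosDef.quadForm_inv_mulVec {A : Matrix ι ι ℂ} (hA : A.PosDef) (h : ι → ℂ) :
    quadForm A (A⁻¹ *ᵥ h) = quadForm A⁻¹ h := by
  rw [quadForm, hA.mulVec_inv_mulVec, quadForm, star_dotProduct_star_comm, Complex.star_def,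
    Complex.conj_re]

/-- Cauchy–Schwarz inequality for the dual pair of quadratic forms of `A` and `A⁻¹`. -/
lemma Matrix.PosDef.normSq_dotProduct_le {A : Matrix ι ι ℂ} (hA : A.PosDef) (w h : ι → ℂ) :
    Complex.normSq (star w ⬝ᵥ h) ≤ quadForm A w * quadForm A⁻¹ h := by
  rcases eq_or_ne h 0 with rfl | hh
  · simp [quadForm]
  set u := A⁻¹ *ᵥ h with hu
  have hAu : A *ᵥ u = h := hA.mulVec_inv_mulVec h
  have hu0 : u ≠ 0 := by
    intro h0
    rw [h0, mulVec_zero] at hAu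
    exact hh hAu.symm
  rw [← hA.quadForm_inv_mulVec, ← hu]
  have ha := hA.quadForm_pos hu0
  set a := quadForm A u with ha'
  set z := star w ⬝ᵥ h with hz
  have huw : star u ⬝ᵥ A *ᵥ w = star z := by
    rw [star_dotProduct_star_comm, star_mulVec, ← dotProduct_mulVec, hA.isHermitian.eq, hAu]
  have key := hA.quadForm_nonneg ((a : ℂ) • w - star z • u)
  have huu := hA.coe_quadForm u
  have hww := hA.coe_quadForm w
  rw [hAu] at huu
  have : quadForm A ((a : ℂ) • w - star z • u)
      = a * (quadForm A w * a - Complex.normSq z) := by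
    rw [quadForm]
    simp only [star_sub, star_smul, mulVec_sub, mulVec_smul, hAu, sub_dotProduct, dotProduct_sub,
      smul_dotProduct, dotProduct_smul, huw, hww, huu, ← hz, ← ha', smul_eq_mul]
    simp [Complex.normSq_apply]
    ring
  rw [this] at key
  linarith [nonneg_of_mul_nonneg_right key ha]

/-- An MMSE receive direction `r` for the signal `h` in noise `A`, with a scaling `δ`. -/
lemma Matrix.PosDef.exists_receiver {A : Matrix ι ι ℂ} (hA : A.PosDef) (h : ι → ℂ) :
    ∃ (r : ι → ℂ) (δ : ℝ), 0 ≤ δ ∧ (star r ⬝ᵥ r).re ≤ 1 ∧ δ * quadForm 1 r = δ ∧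
      δ * quadForm A r ≤ 1 ∧ quadForm A⁻¹ h = δ * Complex.normSq (star r ⬝ᵥ h) := by
  rcases eq_or_ne h 0 with rfl | hh
  · exact ⟨0, 0, by simp [quadForm]⟩
  set u := A⁻¹ *ᵥ h with hu
  have hAu : A *ᵥ u = h := hA.mulVec_inv_mulVec h
  have hu0 : u ≠ 0 := by
    intro h0
    rw [h0, mulVec_zero] at hAu
    exact hh hAu.symm
  have hq : quadForm A u = quadForm A⁻¹ h := hA.quadForm_inv_mulVec h
  have ha := hA.quadForm_pos hu0
  have hN : 0 < quadForm 1 u := PosDef.one.quadForm_pos hu0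
  have hsq : Real.sqrt (quadForm 1 u) ^ 2 = quadForm 1 u := Real.sq_sqrt hN.le
  have hs : 0 < Real.sqrt (quadForm 1 u) := Real.sqrt_pos.mpr hN
  set c := (Real.sqrt (quadForm 1 u))⁻¹ with hc
  have hc2 : c * c = (quadForm 1 u)⁻¹ := by rw [hc, ← mul_inv, ← sq, hsq]
  have hscale : ∀ B : Matrix ι ι ℂ, quadForm B (c • u) = (quadForm 1 u)⁻¹ * quadForm B u := by
    intro B
    rw [← hc2]
    simp [quadForm, mulVec_smul, smul_dotProduct, dotProduct_smul, star_smul, mul_assoc]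
  have h1 : quadForm 1 (c • u) = 1 := by rw [hscale, inv_mul_cancel₀ hN.ne']
  refine ⟨c • u, quadForm 1 u / quadForm A u, by positivity, ?_, ?_, ?_, ?_⟩
  · rw [quadForm, one_mulVec] at h1
    exact h1.le
  · rw [h1, mul_one]
  · rw [hscale]
    exact le_of_eq (by field_simp)
  · have : star (c • u) ⬝ᵥ h = ((c * quadForm A u : ℝ) : ℂ) := by
      have := hA.coe_quadForm u
      rw [hAu] at this
      rw [star_smul, smul_dotProduct, this]
      simp
    rw [this, Complex.normSq_ofReal, mul_mul_mul_comm, hc2, ← hq]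
    field_simp

lemma Matrix.PosDef.det_re_pos {A : Matrix ι ι ℂ} (hA : A.PosDef) : 0 < A.det.re :=
  (Complex.pos_iff.mp hA.det_pos).1

lemma Matrix.PosDef.det_re_add_smul_outerSelf {A : Matrix ι ι ℂ} (hA : A.PosDef) (c : ℝ)
    (v : ι → ℂ) :
    (A + c • outerSelf v).det.re = A.det.re * (1 + c * quadForm A⁻¹ v) := by
  have h1 : c • outerSelf v = replicateCol Unit ((c : ℂ) • v) * replicateRow Unit (star v) := by
    ext i j
    simp [outerSelf, vecMulVec_apply, Matrix.mul_apply, mul_assoc]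
  have h2 : star v ⬝ᵥ A⁻¹ *ᵥ v = (quadForm A⁻¹ v : ℂ) := hA.inv.coe_quadForm v
  rw [h1, det_add_replicateCol_mul_replicateRow (isUnit_iff_isUnit_det A |>.mp hA.isUnit),
    ← replicateRow_vecMul, replicateRow_mul_replicateCol,
    det_unique (n := Unit)]
  have h3 : (1 + of fun (_ _ : Unit) ↦ (star v ᵥ* A⁻¹) ⬝ᵥ ((c : ℂ) • v)) default default
      = ((1 + c * quadForm A⁻¹ v : ℝ) : ℂ) := by
    rw [add_apply, of_apply, ← dotProduct_mulVec, mulVec_smul, dotProduct_smul, h2]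
    simp
  rw [h3, Complex.re_mul_ofReal]

/-- Chain rule for the log-determinant rate: successive cancellation along a linear order. -/
lemma Matrix.PosDef.log_det_sub_log_det [Fintype κ] [LinearOrder κ] {A : Matrix ι ι ℂ}
    (hA : A.PosDef) {p : κ → ℝ} (hp : ∀ i, 0 ≤ p i) (v : κ → ι → ℂ) :
    Real.log (A + ∑ i, p i • outerSelf (v i)).det.re - Real.log A.det.re =
      ∑ i, Real.log
        (1 + p i * quadForm (A + ∑ j with j < i, p j • outerSelf (v j))⁻¹ (v i)) := by
  suffices h : ∀ s : Finset κ,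
      Real.log (A + ∑ i ∈ s, p i • outerSelf (v i)).det.re - Real.log A.det.re =
      ∑ i ∈ s, Real.log
        (1 + p i * quadForm (A + ∑ j ∈ s with j < i, p j • outerSelf (v j))⁻¹ (v i)) from h _
  intro s
  induction s using Finset.induction_on_max with
  | empty => simp
  | insert a s hs ih =>
    have has : a ∉ s := fun h => lt_irrefl a (hs a h)
    have hpos := hA.add_sum_smul_outerSelf s hp v
    have hfa : (insert a s).filter (· < a) = s := by
      rw [Finset.filter_insert, if_neg (lt_irrefl a), Finset.filter_true_of_mem hs]
    have hfi : ∀ i ∈ s, (insert a s).filter (· < i) = s.filter (· < i) := fun i hi => by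
      rw [Finset.filter_insert, if_neg (hs i hi).not_gt]
    have h1 : 0 < 1 + p a * quadForm (A + ∑ i ∈ s, p i • outerSelf (v i))⁻¹ (v a) := by
      have := mul_nonneg (hp a) (hpos.inv.quadForm_nonneg (v a))
      linarith
    have hsum := Finset.sum_congr (s₁ := s) rfl fun i hi => congrArg (fun T => Real.log
      (1 + p i * quadForm (A + ∑ j ∈ T, p j • outerSelf (v j))⁻¹ (v i))) (hfi i hi)
    rw [Finset.sum_insert has, Finset.sum_insert has, hfa, hsum, ← ih, add_comm (p a • _),
      ← add_assoc, hpos.det_re_add_smul_outerSelf, Real.log_mul hpos.det_re_pos.ne' h1.ne']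
    ring

/-- The chain rule of `Matrix.PosDef.log_det_sub_log_det` along the opposite order. -/
lemma Matrix.PosDef.log_det_sub_log_det_gt [Fintype κ] [LinearOrder κ] {A : Matrix ι ι ℂ}
    (hA : A.PosDef) {p : κ → ℝ} (hp : ∀ i, 0 ≤ p i) (v : κ → ι → ℂ) :
    Real.log (A + ∑ i, p i • outerSelf (v i)).det.re - Real.log A.det.re =
      ∑ i, Real.log
        (1 + p i * quadForm (A + ∑ j with i < j, p j • outerSelf (v j))⁻¹ (v i)) :=
  hA.log_det_sub_log_det (κ := κᵒᵈ) hp v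

lemma Matrix.PosSemidef.exists_eq_sum_smul_outerSelf {S : Matrix ι ι ℂ} (hS : S.PosSemidef) :
    ∃ (p : ι → ℝ) (t : ι → ι → ℂ), (∀ i, 0 ≤ p i) ∧ (∀ i, star (t i) ⬝ᵥ t i = 1) ∧
      S = ∑ i, p i • outerSelf (t i) := by
  refine ⟨hS.isHermitian.eigenvalues, fun i => hS.isHermitian.eigenvectorBasis i,
    hS.eigenvalues_nonneg, fun i => ?_, ?_⟩
  · have := hS.isHermitian.eigenvectorBasis.inner_eq_one i
    rw [EuclideanSpace.inner_eq_star_dotProduct, dotProduct_comm] at this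
    exact this
  · conv_lhs => rw [hS.isHermitian.spectral_theorem, Unitary.conjStarAlgAut_apply]
    ext i j
    rw [Matrix.mul_apply, Matrix.sum_apply]
    refine Finset.sum_congr rfl fun k _ => ?_
    simp [outerSelf, vecMulVec_apply, mul_diagonal, star_apply]
    ring

end LinearAlgebra

open Filter Topology in
/-- Sum-power duality for linear SINR constraints: a feasible power vector `p` for the gain matrix
`G` yields a power vector for `Gᵀ` meeting the dual constraints with no larger total power. -/
lemma exists_dual_power {σ : Type*} [Fintype σ] (G : σ → σ → ℝ) (hG : ∀ s s', 0 ≤ G s s')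
    (d p : σ → ℝ) (hd : ∀ s, 0 ≤ d s) (hp : ∀ s, 0 ≤ p s)
    (hdp : ∀ s, d s * (1 + ∑ s', G s s' * p s') ≤ p s) :
    ∃ q : σ → ℝ, (∀ s, 0 ≤ q s) ∧ (∀ s, q s = d s * (1 + ∑ s', G s' s * q s')) ∧
      ∑ s, q s ≤ ∑ s, p s := by
  let F : (σ → ℝ) → σ → ℝ := fun q s => d s * (1 + ∑ s', G s' s * q s')
  have hFmono : Monotone F := fun q q' h s =>
    mul_le_mul_of_nonneg_left (add_le_add_right (Finset.sum_le_sum fun s' _ =>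
      mul_le_mul_of_nonneg_left (h s') (hG s' s)) 1) (hd s)
  let Q : ℕ → σ → ℝ := fun k => F^[k] 0
  have hQsucc : ∀ k, Q (k + 1) = F (Q k) := fun k => Function.iterate_succ_apply' F k 0
  have hF0 : (0 : σ → ℝ) ≤ F 0 := fun s => by simpa [F] using hd s
  have hQmono : Monotone Q := hFmono.monotone_iterate_of_le_map hF0
  have hQ0 : ∀ k s, 0 ≤ Q k s := fun k s => hQmono (Nat.zero_le k) s
  have hQd : ∀ k s, d s = 0 → Q k s = 0 := by
    intro k s hs
    refine le_antisymm ((hQmono (Nat.le_succ k) s).trans ?_) (hQ0 k s)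
    rw [Nat.succ_eq_add_one, hQsucc]
    simp [F, hs]
  have hQsum : ∀ k, ∑ s, Q k s ≤ ∑ s, p s := by
    intro k
    have h1 : ∀ s, (d s)⁻¹ * p s * Q k s ≤ p s * (1 + ∑ s', G s' s * Q k s') := by
      intro s
      have hnn : 0 ≤ 1 + ∑ s', G s' s * Q k s' :=
        add_nonneg zero_le_one (Finset.sum_nonneg fun s' _ => mul_nonneg (hG _ _) (hQ0 k s'))
      rcases eq_or_ne (d s) 0 with h0 | h0
      · simpa [h0] using mul_nonneg (hp s) hnn
      · have hle : Q k s ≤ d s * (1 + ∑ s', G s' s * Q k s') := by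
          have := hQmono (Nat.le_succ k) s
          rwa [Nat.succ_eq_add_one, hQsucc] at this
        calc (d s)⁻¹ * p s * Q k s
            ≤ (d s)⁻¹ * p s * (d s * (1 + ∑ s', G s' s * Q k s')) :=
              mul_le_mul_of_nonneg_left hle (mul_nonneg (inv_nonneg.mpr (hd s)) (hp s))
          _ = p s * (1 + ∑ s', G s' s * Q k s') := by field_simp
    have h2 : ∀ s, Q k s * (1 + ∑ s', G s s' * p s') ≤ (d s)⁻¹ * p s * Q k s := by
      intro s
      rcases eq_or_ne (d s) 0 with h0 | h0
      · simp [hQd k s h0]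
      · have : 1 + ∑ s', G s s' * p s' ≤ (d s)⁻¹ * p s := by
          have hd' : 0 < d s := lt_of_le_of_ne (hd s) h0.symm
          rw [inv_mul_eq_div, le_div_iff₀ hd', mul_comm]
          exact hdp s
        rw [mul_comm ((d s)⁻¹ * p s)]
        exact mul_le_mul_of_nonneg_left this (hQ0 k s)
    have h3 := Finset.sum_le_sum fun s (_ : s ∈ Finset.univ) => (h2 s).trans (h1 s)
    simp only [mul_add, mul_one, Finset.sum_add_distrib, Finset.mul_sum] at h3
    rw [Finset.sum_comm (f := fun s s' => p s * (G s' s * Q k s'))] at h3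
    have h4 : ∑ s, ∑ s', Q k s * (G s s' * p s') = ∑ s, ∑ s', p s' * (G s s' * Q k s) :=
      Finset.sum_congr rfl fun s _ => Finset.sum_congr rfl fun s' _ => by ring
    linarith
  have hbdd : ∀ s, BddAbove (Set.range fun k => Q k s) := by
    intro s
    refine ⟨∑ s, p s, ?_⟩
    rintro _ ⟨k, rfl⟩
    exact (Finset.single_le_sum (fun s _ => hQ0 k s) (Finset.mem_univ s)).trans (hQsum k)
  have hlim : ∀ s, Tendsto (fun k => Q k s) atTop (𝓝 (⨆ k, Q k s)) := fun s =>
    tendsto_atTop_ciSup (fun _ _ h => hQmono h s) (hbdd s)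
  refine ⟨fun s => ⨆ k, Q k s, fun s => ge_of_tendsto' (hlim s) fun k => hQ0 k s, fun s => ?_, ?_⟩
  · refine tendsto_nhds_unique ((tendsto_add_atTop_iff_nat 1).mpr (hlim s)) ?_
    simp only [hQsucc, F]
    exact ((tendsto_finsetSum _ fun s' _ => (hlim s').const_mul _).const_add 1).const_mul _
  · exact le_of_tendsto' (tendsto_finsetSum _ fun s _ => hlim s) hQsum

section Network

variable {L : ℕ} (m n : Fin L → ℕ) (H : ∀ l k : Fin L, Matrix (Fin (n l)) (Fin (m k)) ℂ)
  {Φ : Fin L → Fin L → ℝ}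

lemma posDef_bmacOmega (hΦ : ∀ l k, 0 ≤ Φ l k)
    {S : ∀ k : Fin L, Matrix (Fin (m k)) (Fin (m k)) ℂ} (hS : ∀ k, (S k).PosSemidef) (l : Fin L) :
    (bmacOmega m n H Φ S l).PosDef :=
  PosDef.one.add_posSemidef (posSemidef_sum _ fun k _ =>
    ((hS k).mul_mul_conjTranspose_same (H l k)).smul (hΦ l k))

lemma mul_sum_smul_outerSelf_mul {ι κ μ : Type*} [Fintype ι] [Fintype κ] (B : Matrix μ ι ℂ)
    (p : κ → ℝ) (t : κ → ι → ℂ) :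
    B * (∑ i, p i • outerSelf (t i)) * Bᴴ = ∑ i, p i • outerSelf (B *ᵥ t i) := by
  simp only [Matrix.mul_sum, Matrix.sum_mul, mul_smul_outerSelf_mul]

/-- Noise-plus-interference power seen by a receive vector `v` at link `l`, when every covariance
is a sum of streams and the streams of link `l` in `T` have not been cancelled. -/
lemma quadForm_bmacOmega_add {c : Fin L → ℕ} (p : ∀ k, Fin (c k) → ℝ)
    (t : ∀ k, Fin (c k) → Fin (m k) → ℂ) (l : Fin L) (T : Finset (Fin (c l)))
    (v : Fin (n l) → ℂ) :
    quadForm (bmacOmega m n H Φ (fun k => ∑ i, p k i • outerSelf (t k i)) l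
        + ∑ j ∈ T, p l j • outerSelf (H l l *ᵥ t l j)) v =
      quadForm 1 v + ∑ s : (k : Fin L) × Fin (c k),
        (Φ l s.1 + if s ∈ T.map (Function.Embedding.sigmaMk l) then 1 else 0) *
          Complex.normSq (star v ⬝ᵥ H l s.1 *ᵥ t s.1 s.2) * p s.1 s.2 := by
  simp only [bmacOmega, mul_sum_smul_outerSelf_mul, quadForm_add, quadForm_sum, quadForm_smul,
    quadForm_outerSelf, add_mul, Finset.sum_add_distrib, ite_mul, one_mul, zero_mul, add_assoc]
  rw [Finset.sum_ite_mem, Finset.univ_inter, Finset.sum_map, Fintype.sum_sigma]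
  simp only [Finset.mul_sum]
  congr 2
  · exact Finset.sum_congr rfl fun k _ => Finset.sum_congr rfl fun i _ => by ring
  · exact Finset.sum_congr rfl fun j _ => mul_comm _ _

lemma mem_map_sigmaMk_lt_iff {c : Fin L → ℕ} (s s' : (k : Fin L) × Fin (c k)) :
    s ∈ (Finset.univ.filter (· < s'.2)).map (Function.Embedding.sigmaMk s'.1) ↔
      s' ∈ (Finset.univ.filter (s.2 < ·)).map (Function.Embedding.sigmaMk s.1) := by
  obtain ⟨l, i⟩ := s
  obtain ⟨l', i'⟩ := s'
  simp only [Finset.mem_map, Finset.mem_filter, Finset.mem_univ, true_and,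
    Function.Embedding.sigmaMk_apply]
  constructor
  · rintro ⟨j, hj, h⟩
    cases h
    exact ⟨_, hj, rfl⟩
  · rintro ⟨j, hj, h⟩
    cases h
    exact ⟨_, hj, rfl⟩

lemma bmacRegion_subset_reverse (hΦ : ∀ l k, 0 ≤ Φ l k) (PT : ℝ) :
    bmacRegion m n H Φ PT ⊆ bmacRegion n m (fun l k => (H k l)ᴴ) (fun l k => Φ k l) PT := by
  rintro R ⟨hR0, S, hS, hPS, hR⟩
  choose p t hp ht hSeq using fun k => (hS k).exists_eq_sum_smul_outerSelf
  obtain rfl : S = fun k => ∑ i, p k i • outerSelf (t k i) := funext hSeq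
  have hΩ := posDef_bmacOmega m n H hΦ hS
  have hA := fun (l : Fin L) (i : Fin (m l)) => (hΩ l).add_sum_smul_outerSelf
    (Finset.univ.filter (· < i)) (hp l) (fun j => H l l *ᵥ t l j)
  choose w δ hδ hw hδ1 hδA hδg using fun l i => (hA l i).exists_receiver (H l l *ᵥ t l i)
  let G : (k : Fin L) × Fin (m k) → (k : Fin L) × Fin (m k) → ℝ := fun s s' =>
    (Φ s.1 s'.1 +
      if s' ∈ (Finset.univ.filter (· < s.2)).map (Function.Embedding.sigmaMk s.1) then 1 else 0) *
      Complex.normSq (star (w s.1 s.2) ⬝ᵥ H s.1 s'.1 *ᵥ t s'.1 s'.2)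
  have hG : ∀ s s', 0 ≤ G s s' := fun s s' =>
    mul_nonneg (add_nonneg (hΦ _ _) (by split_ifs <;> norm_num)) (Complex.normSq_nonneg _)
  obtain ⟨q, hq0, hq, hqp⟩ := exists_dual_power G hG (fun s => p s.1 s.2 * δ s.1 s.2)
    (fun s => p s.1 s.2) (fun s => mul_nonneg (hp _ _) (hδ _ _)) (fun s => hp _ _) (by
      intro s
      have h1 := hδA s.1 s.2
      rw [quadForm_bmacOmega_add, mul_add, hδ1] at h1
      calc p s.1 s.2 * δ s.1 s.2 * (1 + ∑ s', G s s' * p s'.1 s'.2)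
          = p s.1 s.2 * (δ s.1 s.2 + δ s.1 s.2 * ∑ s', G s s' * p s'.1 s'.2) := by ring
        _ ≤ p s.1 s.2 * 1 := mul_le_mul_of_nonneg_left h1 (hp _ _)
        _ = p s.1 s.2 := mul_one _)
  have hgain : ∀ (l l' : Fin L) (i : Fin (m l)) (i' : Fin (m l')),
      Complex.normSq (star (t l i) ⬝ᵥ (H l' l)ᴴ *ᵥ w l' i') =
        Complex.normSq (star (w l' i') ⬝ᵥ H l' l *ᵥ t l i) := by
    intro l l' i i'
    rw [star_dotProduct_star_comm, Complex.star_def, Complex.normSq_conj, star_mulVec,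
      conjTranspose_conjTranspose, dotProduct_mulVec]
  have hŜ : ∀ k, (∑ i, q ⟨k, i⟩ • outerSelf (w k i)).PosSemidef := fun k =>
    posSemidef_sum _ fun i _ => posSemidef_smul_outerSelf (hq0 _) _
  have hΩ' := posDef_bmacOmega n m (fun l k => (H k l)ᴴ) (Φ := fun l k => Φ k l)
    (fun l k => hΦ k l) hŜ
  refine ⟨hR0, fun k => ∑ i, q ⟨k, i⟩ • outerSelf (w k i), hŜ, ?_, fun l => (hR l).trans ?_⟩
  · refine le_trans ?_ (hqp.trans (le_trans (le_of_eq ?_) hPS))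
    · rw [Fintype.sum_sigma]
      refine Finset.sum_le_sum fun l _ => ?_
      rw [trace_sum, Complex.re_sum]
      refine Finset.sum_le_sum fun i _ => ?_
      rw [trace_smul_outerSelf]
      exact mul_le_of_le_one_right (hq0 _) (hw l i)
    · simp only [Fintype.sum_sigma, trace_sum, Complex.re_sum, trace_smul_outerSelf, ht,
        Complex.one_re, mul_one]
  · rw [bmacRate, bmacRate, mul_sum_smul_outerSelf_mul, mul_sum_smul_outerSelf_mul,
      (hΩ l).log_det_sub_log_det (hp l),
      (hΩ' l).log_det_sub_log_det_gt (fun i => hq0 ⟨l, i⟩)]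
    refine Finset.sum_le_sum fun i _ => ?_
    let B := bmacOmega n m (fun l k => (H k l)ᴴ) (fun l k => Φ k l)
      (fun k => ∑ i, q ⟨k, i⟩ • outerSelf (w k i)) l +
        ∑ j with i < j, q ⟨l, j⟩ • outerSelf ((H l l)ᴴ *ᵥ w l j)
    have hB : B.PosDef := (hΩ' l).add_sum_smul_outerSelf (Finset.univ.filter (i < ·))
      (fun j => hq0 ⟨l, j⟩) (fun j => (H l l)ᴴ *ᵥ w l j)
    have hqB : q ⟨l, i⟩ = p l i * δ l i * quadForm B (t l i) := by
      refine (hq ⟨l, i⟩).trans (congrArg _ (Eq.symm ?_))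
      refine (quadForm_bmacOmega_add n m (fun l k => (H k l)ᴴ) (Φ := fun l k => Φ k l)
        (fun k i => q ⟨k, i⟩) w l (Finset.univ.filter (i < ·)) (t l i)).trans ?_
      simp only [quadForm, one_mulVec, ht, Complex.one_re, hgain, G,
        mem_map_sigmaMk_lt_iff ⟨l, i⟩]
    have hcs := hB.normSq_dotProduct_le (t l i) ((H l l)ᴴ *ᵥ w l i)
    rw [hgain] at hcs
    have hpos := mul_nonneg (hp l i) ((hA l i).inv.quadForm_nonneg (H l l *ᵥ t l i))
    refine Real.log_le_log (by linarith) (add_le_add_right ?_ 1)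
    rw [hδg, hqB, ← mul_assoc, mul_assoc (p l i * δ l i)]
    exact mul_le_mul_of_nonneg_left hcs (mul_nonneg (hp l i) (hδ l i))

end Network

/-- Rate duality: the forward and reverse achievable rate regions of a B-MAC
network coincide. -/
theorem stmt1 {L : ℕ} (hL : 1 ≤ L) (m n : Fin L → ℕ)
    (H : ∀ l k : Fin L, Matrix (Fin (n l)) (Fin (m k)) ℂ)
    (Φ : Fin L → Fin L → ℝ)
    (hΦ : ∀ l k, Φ l k = 0 ∨ Φ l k = 1) (hΦd : ∀ l, Φ l l = 0)
    (PT : ℝ) (hPT : 0 < PT) :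
    bmacRegion m n H Φ PT
      = bmacRegion n m (fun l k => (H k l)ᴴ) (fun l k => Φ k l) PT := by
  have hΦ0 : ∀ l k, 0 ≤ Φ l k := fun l k => by rcases hΦ l k with h | h <;> simp [h]
  refine (bmacRegion_subset_reverse m n H hΦ0 PT).antisymm ?_
  simpa only [conjTranspose_conjTranspose] using
    bmacRegion_subset_reverse n m (fun l k => (H k l)ᴴ) (fun l k => hΦ0 k l) PT
end
end

section
/- Let H_{1,2}, H_{2,2} ∈ ℂ^{m×m} be invertible with H_{2,2}^† H_{2,2} − H_{1,2}^† H_{1,2} positive semidefinite. Then the function g(Σ) = log det(I + H_{2,2} Σ H_{2,2}^†) − log det(I + H_{1,2} Σ H_{1,2}^†) is concave on the convex set of Hermitian positive semidefinite matrices Σ ∈ ℂ^{m×m}. -/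
open Matrix ComplexOrder

noncomputable section

namespace Matrix

variable {n : Type*} [Fintype n]

open scoped MatrixOrder in
/-- A positive semidefinite complex matrix is a Gram matrix. -/
theorem PosSemidef.exists_eq_conjTranspose_mul_self {A : Matrix n n ℂ} (hA : A.PosSemidef) :
    ∃ R : Matrix n n ℂ, A = Rᴴ * R := by
  classical
  exact CStarAlgebra.nonneg_iff_eq_star_mul_self.mp hA.nonneg

theorem PosSemidef.re_trace_mul_nonneg {A B : Matrix n n ℂ} (hA : A.PosSemidef)
    (hB : B.PosSemidef) : 0 ≤ (A * B).trace.re := by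
  obtain ⟨R, rfl⟩ := hA.exists_eq_conjTranspose_mul_self
  rw [← trace_mul_cycle]
  exact (Complex.le_def.mp (hB.mul_mul_conjTranspose_same R).trace_nonneg).1

variable [DecidableEq n]

theorem PosDef.re_det_pos {A : Matrix n n ℂ} (hA : A.PosDef) : 0 < A.det.re :=
  (Complex.lt_def.mp hA.det_pos).1

/-- `log det Z ≤ tr (Z - 1)` for positive definite `Z`. -/
theorem PosDef.log_re_det_le_re_trace_sub_one {Z : Matrix n n ℂ} (hZ : Z.PosDef) :
    Real.log Z.det.re ≤ (Z - 1).trace.re := by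
  have hdet : Z.det.re = ∏ i, hZ.1.eigenvalues i := by
    rw [hZ.1.det_eq_prod_eigenvalues, ← Complex.ofReal_re (∏ i, hZ.1.eigenvalues i)]
    simp
  have htr : (Z - 1).trace.re = ∑ i, (hZ.1.eigenvalues i - 1) := by
    rw [trace_sub, hZ.1.trace_eq_sum_eigenvalues]
    simp
  rw [hdet, htr, Real.log_prod fun i _ => (hZ.eigenvalues_pos i).ne']
  exact Finset.sum_le_sum fun i _ => Real.log_le_sub_one_of_pos (hZ.eigenvalues_pos i)

/-- The tangent inequality for the concave function `log det` at `W`. -/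
theorem PosDef.log_re_det_le_add_re_trace {W X : Matrix n n ℂ} (hW : W.PosDef) (hX : X.PosDef) :
    Real.log X.det.re ≤ Real.log W.det.re + (W⁻¹ * (X - W)).trace.re := by
  have hWu : IsUnit W.det := (isUnit_iff_isUnit_det _).mp hW.isUnit
  obtain ⟨R, hR⟩ := hW.inv.posSemidef.exists_eq_conjTranspose_mul_self
  have hRu : IsUnit R := by
    have h := hW.inv.isUnit
    rw [hR] at h
    exact isUnit_of_mul_isUnit_right h
  have hZ : (R * X * Rᴴ).PosDef :=
    (Matrix.IsUnit.posDef_star_right_conjugate_iff hRu).mpr hX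
  have hdet : W.det * (R * X * Rᴴ).det = X.det := by
    calc W.det * (R * X * Rᴴ).det = (W.det * (Rᴴ * R).det) * X.det := by
          simp only [det_mul]; ring
      _ = X.det := by rw [← hR, ← det_mul, mul_nonsing_inv _ hWu, det_one, one_mul]
  have htr : (W⁻¹ * (X - W)).trace = (R * X * Rᴴ - 1).trace := by
    rw [mul_sub, nonsing_inv_mul _ hWu, trace_sub, trace_sub, hR, trace_mul_cycle R X Rᴴ]
  have hre : X.det.re = W.det.re * (R * X * Rᴴ).det.re := by
    rw [← hdet, Complex.mul_re, ← (Complex.lt_def.mp hW.det_pos).2]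
    simp
  rw [hre, Real.log_mul hW.re_det_pos.ne' hZ.re_det_pos.ne', htr]
  gcongr
  exact hZ.log_re_det_le_re_trace_sub_one

/-- `log det` is concave and monotone on positive definite matrices. -/
theorem PosDef.log_re_det_concave_of_le {X Y W : Matrix n n ℂ} (hX : X.PosDef) (hY : Y.PosDef)
    (hW : W.PosDef) {t : ℝ} (ht0 : 0 ≤ t) (ht1 : t ≤ 1)
    (hle : (W - (t • X + (1 - t) • Y)).PosSemidef) :
    t * Real.log X.det.re + (1 - t) * Real.log Y.det.re ≤ Real.log W.det.re := by
  have h₁ := mul_le_mul_of_nonneg_left (hW.log_re_det_le_add_re_trace hX) ht0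
  have h₂ := mul_le_mul_of_nonneg_left (hW.log_re_det_le_add_re_trace hY) (sub_nonneg.mpr ht1)
  have h₃ := hW.inv.posSemidef.re_trace_mul_nonneg hle
  simp only [mul_sub, mul_add, Matrix.mul_smul, trace_sub, trace_add, trace_smul,
    Complex.sub_re, Complex.add_re, Complex.smul_re, smul_eq_mul] at h₁ h₂ h₃
  linarith

/-- Matrix inversion is operator convex on positive definite matrices. -/
theorem PosDef.inv_convex {X Y : Matrix n n ℂ} (hX : X.PosDef) (hY : Y.PosDef) {t : ℝ}
    (ht0 : 0 ≤ t) (ht1 : t ≤ 1) (hXY : (t • X + (1 - t) • Y).PosDef) :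
    (t • X⁻¹ + (1 - t) • Y⁻¹ - (t • X + (1 - t) • Y)⁻¹).PosSemidef := by
  have hblock : ∀ {A : Matrix n n ℂ}, A.PosDef →
      (fromBlocks A 1 (1 : Matrix n n ℂ)ᴴ A⁻¹).PosSemidef := fun {A} hA => by
    let _ := hA.isUnit.invertible
    rw [hA.fromBlocks₁₁]
    simp [PosSemidef.zero]
  let _ := hXY.isUnit.invertible
  have h := ((hblock hX).smul ht0).add ((hblock hY).smul (sub_nonneg.mpr ht1))
  rw [fromBlocks_smul, fromBlocks_smul, fromBlocks_add, ← add_smul, ← add_smul,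
    add_sub_cancel, one_smul, one_smul, hXY.fromBlocks₁₁] at h
  simpa using h

theorem PosDef.one_sub_inv_posSemidef {X : Matrix n n ℂ} (hX : X.PosDef)
    (h : (X - 1).PosSemidef) : (1 - X⁻¹).PosSemidef := by
  let _ := hX.isUnit.invertible
  let _ : Invertible (1 : Matrix n n ℂ) := invertibleOne
  have h₁ : (fromBlocks X 1 (1 : Matrix n n ℂ)ᴴ 1).PosSemidef := by
    rw [PosDef.fromBlocks₂₂ _ _ PosDef.one]
    simpa using h
  rw [hX.fromBlocks₁₁] at h₁
  simpa using h₁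

/-- If `BᴴB - AᴴA = RᴴR` with `A` invertible, the quotient `det (1 + BSBᴴ) / det (1 + ASAᴴ)` is
the determinant of an expression depending on `S` only through `(1 + ASAᴴ)⁻¹`. -/
theorem det_one_add_mul_det_one_add {A B R S : Matrix n n ℂ} (hA : IsUnit A)
    (hN : IsUnit (1 + A * S * Aᴴ)) (hR : Bᴴ * B - Aᴴ * A = Rᴴ * R) :
    (1 + A * S * Aᴴ).det * (1 + R * A⁻¹ * (1 - (1 + A * S * Aᴴ)⁻¹) * (R * A⁻¹)ᴴ).det =
      (1 + B * S * Bᴴ).det := by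
  have hA' : IsUnit A.det := (isUnit_iff_isUnit_det _).mp hA
  set N := 1 + A * S * Aᴴ with hNdef
  have hN' : IsUnit N.det := (isUnit_iff_isUnit_det _).mp hN
  have hAH : Aᴴ * A⁻¹ᴴ = 1 := by
    rw [← conjTranspose_mul, nonsing_inv_mul _ hA', conjTranspose_one]
  have hcancel : N * (1 - N⁻¹) = A * S * Aᴴ := by
    rw [mul_sub, mul_nonsing_inv _ hN', hNdef]; simp
  have hRR : Rᴴ * R * A⁻¹ = Bᴴ * B * A⁻¹ - Aᴴ := by
    rw [← hR, sub_mul, mul_assoc Aᴴ, mul_nonsing_inv _ hA', mul_one]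
  calc N.det * (1 + R * A⁻¹ * (1 - N⁻¹) * (R * A⁻¹)ᴴ).det
      = N.det * (1 + (1 - N⁻¹) * (R * A⁻¹)ᴴ * (R * A⁻¹)).det := by
        rw [mul_assoc (R * A⁻¹), det_one_add_mul_comm (R * A⁻¹)]
    _ = (N + N * (1 - N⁻¹) * (R * A⁻¹)ᴴ * (R * A⁻¹)).det := by
        rw [← det_mul, mul_add, mul_one]; simp only [mul_assoc]
    _ = (N + A * S * (Aᴴ * A⁻¹ᴴ) * (Rᴴ * R * A⁻¹)).det := by
        rw [hcancel, conjTranspose_mul]; simp only [mul_assoc]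
    _ = (1 + A * (S * Bᴴ * B * A⁻¹)).det := by
        rw [hAH, hRR, hNdef, mul_one, mul_sub]
        congr 1
        simp only [mul_assoc]
        abel
    _ = (1 + S * Bᴴ * B).det := by
        rw [det_one_add_mul_comm, mul_assoc _ A⁻¹, nonsing_inv_mul _ hA', mul_one]
    _ = (1 + B * S * Bᴴ).det := by rw [det_one_add_mul_comm, ← mul_assoc]

end Matrix

/-- `g(Σ) = log det(I + H₂₂ΣH₂₂ᴴ) − log det(I + H₁₂ΣH₁₂ᴴ)` is concave on the
set of Hermitian positive semidefinite matrices when `H₁₂, H₂₂` are invertible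
and `H₂₂ᴴH₂₂ − H₁₂ᴴH₁₂` is positive semidefinite. -/
theorem stmt12 {m : ℕ}
    (H12 H22 : Matrix (Fin m) (Fin m) ℂ)
    (hH12 : IsUnit H12) (hH22 : IsUnit H22)
    (hdom : (H22ᴴ * H22 - H12ᴴ * H12).PosSemidef)
    (g : Matrix (Fin m) (Fin m) ℂ → ℝ)
    (hg : ∀ S, g S = Real.log ((1 + H22 * S * H22ᴴ).det.re)
        - Real.log ((1 + H12 * S * H12ᴴ).det.re)) :
    ∀ (S Z : Matrix (Fin m) (Fin m) ℂ), S.PosSemidef → Z.PosSemidef →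
      ∀ t : ℝ, 0 ≤ t → t ≤ 1 →
        t * g S + (1 - t) * g Z ≤ g (t • S + (1 - t) • Z) := by
  intro S Z hS hZ t ht0 ht1
  obtain ⟨R, hR⟩ := hdom.exists_eq_conjTranspose_mul_self
  let N : Matrix (Fin m) (Fin m) ℂ → Matrix (Fin m) (Fin m) ℂ := fun T => 1 + H12 * T * H12ᴴ
  let M : Matrix (Fin m) (Fin m) ℂ → Matrix (Fin m) (Fin m) ℂ := fun T =>
    1 + R * H12⁻¹ * (1 - (N T)⁻¹) * (R * H12⁻¹)ᴴ
  have hN : ∀ {T}, T.PosSemidef → (N T).PosDef := fun hT =>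
    PosDef.one.add_posSemidef (hT.mul_mul_conjTranspose_same H12)
  have hM : ∀ {T}, T.PosSemidef → (M T).PosDef := fun {T} hT => by
    refine PosDef.one.add_posSemidef (PosSemidef.mul_mul_conjTranspose_same ?_ _)
    refine (hN hT).one_sub_inv_posSemidef ?_
    simpa [N] using hT.mul_mul_conjTranspose_same H12
  have hgM : ∀ {T}, T.PosSemidef → g T = Real.log (M T).det.re := fun {T} hT => by
    have hdet : (N T).det * (M T).det = (1 + H22 * T * H22ᴴ).det :=
      det_one_add_mul_det_one_add hH12 (hN hT).isUnit hR
    rw [hg, ← hdet, Complex.mul_re, ← (Complex.lt_def.mp (hN hT).det_pos).2, Complex.zero_im,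
      zero_mul, sub_zero, Real.log_mul (hN hT).re_det_pos.ne' (hM hT).re_det_pos.ne']
    exact add_sub_cancel_left _ _
  have hSZ : (t • S + (1 - t) • Z).PosSemidef :=
    (hS.smul ht0).add (hZ.smul (sub_nonneg.mpr ht1))
  have hNmix : N (t • S + (1 - t) • Z) = t • N S + (1 - t) • N Z := by
    simp only [N, mul_add, add_mul, Matrix.mul_smul, Matrix.smul_mul, smul_add]
    module
  have hconv := (hN hS).inv_convex (hN hZ) ht0 ht1 (hNmix ▸ hN hSZ)
  rw [hgM hS, hgM hZ, hgM hSZ]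
  refine (hM hS).log_re_det_concave_of_le (hM hZ) (hM hSZ) ht0 ht1 ?_
  convert hconv.mul_mul_conjTranspose_same (R * H12⁻¹) using 1
  simp only [M, hNmix, mul_sub, sub_mul, mul_add, add_mul, Matrix.mul_smul, Matrix.smul_mul, mul_one]
  module
end
end
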